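/- Let Δ₁ > Δ₂ > 1 be real numbers, let P(x) = Δ₁Δ₂ x³ − (Δ₁Δ₂ + Δ₁ + Δ₂) x² + 2(Δ₁ + Δ₂ + 1) x − 6, and for ρ ∈ ℝ let A(ρ) be the 3×3 real matrix with rows (ρ−2, ρ−1, ρ−3), (ρΔ₁² − 2Δ₁, ρΔ₁ − 1, ρΔ₁³ − 3Δ₁²), and (ρΔ₂² − 2Δ₂, ρΔ₂ − 1, ρΔ₂³ − 3Δ₂²). Suppose condition (C) holds (i.e. Δ₂² − (Δ₁ + 1)Δ₂ + 3Δ₁ > 0 or Δ₁ < 5 + 2√6) and P(r) = 0 for some real r. Then there exist real numbers a, b such that A(r)·(a, b, 1)ᵀ = 0 and a² − 4b < 0, and moreover the triplet (r, a, b) with these two properties is unique. -/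

import Mathlib

/-!
The rows of `A ρ` evaluate at the nodes `1`, `Δ₁`, `Δ₂`: with `p t = t * (t ^ 2 + a * t + b)`, the
vector `(a, b, 1)` is a null vector exactly when `ρ * p - p'` vanishes at the three nodes `x`, `y`,
`z`, that is, when it equals `ρ * (t - x) * (t - y) * (t - z)`. Comparing coefficients determines
`a` and `b` from `ρ` and leaves the single equation `P ρ = 0`.

In the variables `u = ρ * x - 1`, `v = ρ * y - 1`, `w = ρ * z - 1` this equation reads
`u * v * w + u + v + w = 2`, and under it `ρ ^ 2 * (a ^ 2 - 4 * b)` factors as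
`-(u * v + 2) * (u * w + 2) * (v * w + 2)`. Condition (C) makes the three factors positive. The
resulting negativity of the discriminant forces `P' > 0` at every root of `P`, so `P` can cross
zero only upwards and has at most one root.
-/

open Set
open scoped Topology Matrix

/-- The polynomial `P` of the theorem for arbitrary nodes `x`, `y`, `z` in place of `1`, `Δ₁`,
`Δ₂`; its coefficients are multiples of the elementary symmetric functions of the nodes. -/
def nodeCubic {R : Type*} [CommRing R] (x y z ρ : R) : R :=
  x * y * z * ρ ^ 3 - (x * y + x * z + y * z) * ρ ^ 2 + 2 * (x + y + z) * ρ - 6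

/-- The matrix `A ρ` of the theorem for arbitrary nodes `x`, `y`, `z` in place of `1`, `Δ₁`,
`Δ₂`. -/
def nodeMatrix {R : Type*} [CommRing R] (x y z ρ : R) : Matrix (Fin 3) (Fin 3) R :=
  !![ρ * x ^ 2 - 2 * x, ρ * x - 1, ρ * x ^ 3 - 3 * x ^ 2;
     ρ * y ^ 2 - 2 * y, ρ * y - 1, ρ * y ^ 3 - 3 * y ^ 2;
     ρ * z ^ 2 - 2 * z, ρ * z - 1, ρ * z ^ 3 - 3 * z ^ 2]

theorem cubic_eq_zero_at_distinct_iff_vieta {R : Type*} [CommRing R] [IsDomain R]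
    {x y z : R} (hxy : x ≠ y) (hxz : x ≠ z) (hyz : y ≠ z) {c₀ c₁ c₂ c₃ : R} :
    (c₃ * x ^ 3 + c₂ * x ^ 2 + c₁ * x + c₀ = 0 ∧
      c₃ * y ^ 3 + c₂ * y ^ 2 + c₁ * y + c₀ = 0 ∧
      c₃ * z ^ 3 + c₂ * z ^ 2 + c₁ * z + c₀ = 0) ↔
    c₂ = -c₃ * (x + y + z) ∧ c₁ = c₃ * (x * y + x * z + y * z) ∧ c₀ = -c₃ * (x * y * z) := by
  constructor
  · rintro ⟨hx, hy, hz⟩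
    have divided_xy : c₃ * (x ^ 2 + x * y + y ^ 2) + c₂ * (x + y) + c₁ = 0 :=
      mul_left_cancel₀ (sub_ne_zero.2 hxy) (by linear_combination hx - hy)
    have divided_xz : c₃ * (x ^ 2 + x * z + z ^ 2) + c₂ * (x + z) + c₁ = 0 :=
      mul_left_cancel₀ (sub_ne_zero.2 hxz) (by linear_combination hx - hz)
    have divided_xyz : c₃ * (x + y + z) + c₂ = 0 :=
      mul_left_cancel₀ (sub_ne_zero.2 hyz) (by linear_combination divided_xy - divided_xz)
    refine ⟨?_, ?_, ?_⟩
    · linear_combination divided_xyz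
    · linear_combination divided_xy - (x + y) * divided_xyz
    · linear_combination hx - x * divided_xy + x * y * divided_xyz
  · rintro ⟨rfl, rfl, rfl⟩
    refine ⟨?_, ?_, ?_⟩ <;> ring

theorem nodeMatrix_mulVec_eq_zero_iff_vieta {R : Type*} [CommRing R] [IsDomain R]
    {x y z : R} (hxy : x ≠ y) (hxz : x ≠ z) (hyz : y ≠ z) {ρ a b : R} :
    nodeMatrix x y z ρ *ᵥ ![a, b, 1] = 0 ↔
      ρ * a - 3 = -ρ * (x + y + z) ∧ ρ * b - 2 * a = ρ * (x * y + x * z + y * z) ∧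
        -b = -ρ * (x * y * z) := by
  have row (t : R) : a * (ρ * t ^ 2 - 2 * t) + (b * (ρ * t - 1) + (ρ * t ^ 3 - 3 * t ^ 2)) =
      ρ * t ^ 3 + (ρ * a - 3) * t ^ 2 + (ρ * b - 2 * a) * t + -b := by ring
  rw [← cubic_eq_zero_at_distinct_iff_vieta hxy hxz hyz, ← row x, ← row y, ← row z]
  simp [funext_iff, Fin.forall_fin_succ, nodeMatrix]

theorem ne_zero_of_nodeCubic_eq_zero {R : Type*} [CommRing R] [CharZero R] {x y z ρ : R}
    (hρ : nodeCubic x y z ρ = 0) : ρ ≠ 0 := by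
  rintro rfl
  simp [nodeCubic] at hρ

theorem nodeMatrix_mulVec_eq_zero_iff {K : Type*} [Field K] [CharZero K]
    {x y z : K} (hxy : x ≠ y) (hxz : x ≠ z) (hyz : y ≠ z) {ρ a b : K} :
    nodeMatrix x y z ρ *ᵥ ![a, b, 1] = 0 ↔
      nodeCubic x y z ρ = 0 ∧ a = 3 / ρ - (x + y + z) ∧ b = ρ * (x * y * z) := by
  rw [nodeMatrix_mulVec_eq_zero_iff_vieta hxy hxz hyz]
  constructor
  · rintro ⟨h₂, h₁, h₀⟩
    have hroot : nodeCubic x y z ρ = 0 := by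
      unfold nodeCubic
      linear_combination 2 * h₂ + ρ * h₁ + ρ ^ 2 * h₀
    have hρ := ne_zero_of_nodeCubic_eq_zero hroot
    refine ⟨hroot, ?_, by linear_combination -h₀⟩
    field_simp
    linear_combination h₂
  · rintro ⟨hroot, rfl, rfl⟩
    have hρ := ne_zero_of_nodeCubic_eq_zero hroot
    unfold nodeCubic at hroot
    refine ⟨?_, ?_, by ring⟩
    · field_simp
      ring
    · field_simp
      linear_combination hroot

section OrderedRing

variable {R : Type*} [CommRing R] [LinearOrder R] [IsStrictOrderedRing R]

theorem mul_add_two_pos_of_gap_pos {u v w : R} (h : u * v * w + u + v + w = 2)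
    (hgap : 0 < (w - u) * (w - v) + 2 * ((u + 1) * (v + 1))) : 0 < u * v + 2 := by
  -- Solving `h` for `w` in the gap and clearing the denominator `1 + u * v`.
  have key : ((w - u) * (w - v) + 2 * ((u + 1) * (v + 1))) * (1 + u * v) ^ 2 =
      (u * v + 2) * ((u + v + u * v - 1) ^ 2 + 2 * (u * v + 1) ^ 2) := by
    linear_combination (w * (1 + u * v) + 2 - (u + v) - (u + v) * (1 + u * v)) * h
  by_contra! hle
  have hne : 1 + u * v ≠ 0 := by linarith
  have hpos : 0 < (u * v + 2) * ((u + v + u * v - 1) ^ 2 + 2 * (u * v + 1) ^ 2) := by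
    rw [← key]
    positivity
  exact hpos.not_ge (mul_nonpos_of_nonpos_of_nonneg hle (by positivity))

theorem sq_sum_lt_four_mul_prod_add_one {u v w : R} (h : u * v * w + u + v + w = 2)
    (huv : 0 < u * v + 2) (huw : 0 < u * w + 2) (hvw : 0 < v * w + 2) :
    (u + v + w) ^ 2 < 4 * ((u + 1) * (v + 1) * (w + 1)) := by
  have factorization : (u + v + w) ^ 2 - 4 * ((u + 1) * (v + 1) * (w + 1)) =
      -((u * v + 2) * (u * w + 2) * (v * w + 2)) := by
    linear_combination (u * v * w + u + v + w - 2) * h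
  have : 0 < (u * v + 2) * (u * w + 2) * (v * w + 2) := by positivity
  linarith

theorem nodeCubic_root_discrim_neg {x y z ρ : R} (hρ : nodeCubic x y z ρ = 0)
    (hx : 0 < (x - y) * (x - z) + 2 * (y * z)) (hy : 0 < (y - x) * (y - z) + 2 * (x * z))
    (hz : 0 < (z - x) * (z - y) + 2 * (x * y)) :
    (3 - ρ * (x + y + z)) ^ 2 < 4 * (ρ ^ 3 * (x * y * z)) := by
  have hρ₀ : 0 < ρ ^ 2 := sq_pos_of_ne_zero (ne_zero_of_nodeCubic_eq_zero hρ)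
  unfold nodeCubic at hρ
  have hyz : 0 < (ρ * y - 1) * (ρ * z - 1) + 2 :=
    mul_add_two_pos_of_gap_pos (w := ρ * x - 1) (by linear_combination hρ)
      (by linear_combination mul_pos hρ₀ hx)
  have hxz : 0 < (ρ * x - 1) * (ρ * z - 1) + 2 :=
    mul_add_two_pos_of_gap_pos (w := ρ * y - 1) (by linear_combination hρ)
      (by linear_combination mul_pos hρ₀ hy)
  have hxy : 0 < (ρ * x - 1) * (ρ * y - 1) + 2 :=
    mul_add_two_pos_of_gap_pos (w := ρ * z - 1) (by linear_combination hρ)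
      (by linear_combination mul_pos hρ₀ hz)
  linear_combination sq_sum_lt_four_mul_prod_add_one (by linear_combination hρ) hxy hxz hyz

theorem pos_of_nodeCubic_eq_zero {x y z ρ : R} (hx : 0 ≤ x) (hy : 0 ≤ y) (hz : 0 ≤ z)
    (hρ : nodeCubic x y z ρ = 0) : 0 < ρ := by
  by_contra! hle
  have hcube : x * y * z * ρ ^ 3 ≤ 0 :=
    mul_nonpos_of_nonneg_of_nonpos (by positivity) (Odd.pow_nonpos (by decide) hle)
  have hsq : 0 ≤ (x * y + x * z + y * z) * ρ ^ 2 := by positivity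
  have hlin : 2 * (x + y + z) * ρ ≤ 0 := mul_nonpos_of_nonneg_of_nonpos (by positivity) hle
  unfold nodeCubic at hρ
  linarith

theorem nodeCubic_deriv_pos_of_discrim_neg {x y z ρ : R} (hpos : 0 < ρ)
    (hρ : nodeCubic x y z ρ = 0)
    (hdisc : (3 - ρ * (x + y + z)) ^ 2 < 4 * (ρ ^ 3 * (x * y * z))) :
    0 < 3 * (x * y * z) * ρ ^ 2 - 2 * (x * y + x * z + y * z) * ρ + 2 * (x + y + z) := by
  have hmul : 0 < 4 * ρ *
      (3 * (x * y * z) * ρ ^ 2 - 2 * (x * y + x * z + y * z) * ρ + 2 * (x + y + z)) := by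
    unfold nodeCubic at hρ
    -- At the root `4 * ρ` times the derivative exceeds `(ρ * (x + y + z) - 7) ^ 2 + 8`.
    linear_combination hdisc - 8 * hρ + sq_nonneg (ρ * (x + y + z) - 7)
  exact pos_of_mul_pos_right hmul (by positivity)

end OrderedRing

theorem eq_of_eq_zero_of_deriv_pos_at_zeros {f : ℝ → ℝ} (hf : Continuous f)
    (hderiv : ∀ t, f t = 0 → 0 < deriv f t) {x y : ℝ} (hx : f x = 0) (hy : f y = 0) : x = y := by
  wlog hlt : x < y generalizing x y
  · rcases (not_lt.1 hlt).eq_or_lt with heq | hgt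
    · exact heq.symm
    · exact (this hy hx hgt).symm
  have nonneg_right : ∀ t, 0 ≤ f t → ∀ᶠ s in 𝓝[>] t, 0 ≤ f s := by
    intro t ht
    rcases ht.eq_or_lt with hzero | hpos
    · filter_upwards [nhdsWithin_le_nhds <|
        eventually_nhdsWithin_sign_eq_of_deriv_pos (hderiv t hzero.symm) hzero.symm,
        self_mem_nhdsWithin] with s hs hts
      rw [sign_pos (sub_pos.2 hts), sign_eq_one_iff] at hs
      exact hs.le
    · exact nhdsWithin_le_nhds ((hf.tendsto t).eventually_const_le hpos)
  have nonneg : Icc x y ⊆ {t | 0 ≤ f t} :=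
    ((isClosed_le continuous_const hf).inter isClosed_Icc).Icc_subset_of_forall_mem_nhdsWithin
      hx.ge fun t ht => nonneg_right t ht.1
  have neg_left : ∀ᶠ s in 𝓝[<] y, f s < 0 := by
    filter_upwards [nhdsWithin_le_nhds <|
      eventually_nhdsWithin_sign_eq_of_deriv_pos (hderiv y hy) hy, self_mem_nhdsWithin]
      with s hs hsy
    rwa [sign_neg (sub_neg.2 hsy), sign_eq_neg_one_iff] at hs
  obtain ⟨s, hneg, hs⟩ := (neg_left.and (Ioo_mem_nhdsLT hlt)).exists
  exact absurd (nonneg (Ioo_subset_Icc_self hs)) hneg.not_ge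

theorem hasDerivAt_nodeCubic (x y z ρ : ℝ) :
    HasDerivAt (nodeCubic x y z)
      (3 * (x * y * z) * ρ ^ 2 - 2 * (x * y + x * z + y * z) * ρ + 2 * (x + y + z)) ρ := by
  refine (((((hasDerivAt_pow 3 ρ).const_mul (x * y * z)).sub
    ((hasDerivAt_pow 2 ρ).const_mul (x * y + x * z + y * z))).add
    ((hasDerivAt_id ρ).const_mul (2 * (x + y + z)))).sub_const 6).congr_deriv ?_
  push_cast
  ring

theorem nodeCubic_root_unique {x y z ρ σ : ℝ} (hx₀ : 0 ≤ x) (hy₀ : 0 ≤ y) (hz₀ : 0 ≤ z)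
    (hx : 0 < (x - y) * (x - z) + 2 * (y * z)) (hy : 0 < (y - x) * (y - z) + 2 * (x * z))
    (hz : 0 < (z - x) * (z - y) + 2 * (x * y))
    (hρ : nodeCubic x y z ρ = 0) (hσ : nodeCubic x y z σ = 0) : ρ = σ := by
  have hcont : Continuous (nodeCubic x y z) :=
    continuous_iff_continuousAt.2 fun t => (hasDerivAt_nodeCubic x y z t).continuousAt
  refine eq_of_eq_zero_of_deriv_pos_at_zeros hcont (fun t ht => ?_) hρ hσ
  rw [(hasDerivAt_nodeCubic x y z t).deriv]
  exact nodeCubic_deriv_pos_of_discrim_neg (pos_of_nodeCubic_eq_zero hx₀ hy₀ hz₀ ht) ht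
    (nodeCubic_root_discrim_neg ht hx hy hz)

theorem condition_and_root_implies_unique_nullvector_general {x y z : ℝ} (hx : 0 < x)
    (hxz : x < z) (hzy : z < y) (hgap : 0 < (z - x) * (z - y) + 2 * (x * y))
    {ρ : ℝ} (hρ : nodeCubic x y z ρ = 0) :
    ∃ a b : ℝ, (nodeMatrix x y z ρ *ᵥ ![a, b, 1] = 0 ∧ a ^ 2 - 4 * b < 0) ∧
      ∀ ρ' a' b' : ℝ, nodeMatrix x y z ρ' *ᵥ ![a', b', 1] = 0 → ρ' = ρ ∧ a' = a ∧ b' = b := by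
  have hz : 0 < z := hx.trans hxz
  have hy : 0 < y := hz.trans hzy
  have hxy : x < y := hxz.trans hzy
  have gap_x : 0 < (x - y) * (x - z) + 2 * (y * z) :=
    add_pos (mul_pos_of_neg_of_neg (sub_neg.2 hxy) (sub_neg.2 hxz)) (by positivity)
  have gap_y : 0 < (y - x) * (y - z) + 2 * (x * z) :=
    add_pos (mul_pos (sub_pos.2 hxy) (sub_pos.2 hzy)) (by positivity)
  have null_iff {ρ a b : ℝ} :=
    nodeMatrix_mulVec_eq_zero_iff (ρ := ρ) (a := a) (b := b) hxy.ne hxz.ne hzy.ne'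
  have hρ₀ := ne_zero_of_nodeCubic_eq_zero hρ
  refine ⟨3 / ρ - (x + y + z), ρ * (x * y * z), ⟨null_iff.2 ⟨hρ, rfl, rfl⟩, ?_⟩, ?_⟩
  · have discrim_eq : (3 / ρ - (x + y + z)) ^ 2 - 4 * (ρ * (x * y * z)) =
        ((3 - ρ * (x + y + z)) ^ 2 - 4 * (ρ ^ 3 * (x * y * z))) / ρ ^ 2 := by
      field_simp
    rw [discrim_eq]
    exact div_neg_of_neg_of_pos
      (sub_neg.2 (nodeCubic_root_discrim_neg hρ gap_x gap_y hgap)) (by positivity)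
  · intro ρ' a' b' hnull
    obtain ⟨hρ', ha', hb'⟩ := null_iff.1 hnull
    obtain rfl := nodeCubic_root_unique hx.le hy.le hz.le gap_x gap_y hgap hρ' hρ
    exact ⟨rfl, ha', hb'⟩

theorem quadratic_pos_of_abs_sub_five_lt {s : ℝ} (hs : |s - 5| < 2 * √6) (t : ℝ) :
    0 < t ^ 2 - (s + 1) * t + 3 * s := by
  have hsq : (s - 5) ^ 2 < 24 := by
    calc (s - 5) ^ 2 < (2 * √6) ^ 2 := sq_lt_sq' (abs_lt.1 hs).1 (abs_lt.1 hs).2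
      _ = 24 := by rw [mul_pow, Real.sq_sqrt (by norm_num)]; norm_num
  linear_combination (hsq + sq_nonneg (2 * t - (s + 1))) / 4

/-- **From condition (C) and a root of `P` to a unique nullvector triplet.**
If condition (C) holds and `P(r) = 0`, then there exist `a, b` with
`A(r)·(a, b, 1)ᵀ = 0` and `a² − 4b < 0`, and the triplet `(r, a, b)` with these two
properties is unique. -/
theorem condition_and_root_implies_unique_nullvector
    (Δ₁ Δ₂ : ℝ) (h21 : 1 < Δ₂) (h12 : Δ₂ < Δ₁)
    (P : ℝ → ℝ)
    (hP : P = fun x => Δ₁ * Δ₂ * x ^ 3 - (Δ₁ * Δ₂ + Δ₁ + Δ₂) * x ^ 2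
      + 2 * (Δ₁ + Δ₂ + 1) * x - 6)
    (A : ℝ → Matrix (Fin 3) (Fin 3) ℝ)
    (hA : A = fun ρ =>
      !![ρ - 2, ρ - 1, ρ - 3;
         ρ * Δ₁ ^ 2 - 2 * Δ₁, ρ * Δ₁ - 1, ρ * Δ₁ ^ 3 - 3 * Δ₁ ^ 2;
         ρ * Δ₂ ^ 2 - 2 * Δ₂, ρ * Δ₂ - 1, ρ * Δ₂ ^ 3 - 3 * Δ₂ ^ 2])
    (hC : Δ₂ ^ 2 - (Δ₁ + 1) * Δ₂ + 3 * Δ₁ > 0 ∨ Δ₁ < 5 + 2 * Real.sqrt 6)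
    (r : ℝ) (hroot : P r = 0) :
    ∃ a b : ℝ,
      ((A r).mulVec ![a, b, 1] = 0 ∧ a ^ 2 - 4 * b < 0) ∧
      (∀ r' a' b' : ℝ,
        (A r').mulVec ![a', b', 1] = 0 → a' ^ 2 - 4 * b' < 0 →
        r' = r ∧ a' = a ∧ b' = b) := by
  have hquad : 0 < Δ₂ ^ 2 - (Δ₁ + 1) * Δ₂ + 3 * Δ₁ := by
    refine hC.elim id fun hlt => quadratic_pos_of_abs_sub_five_lt (abs_lt.2 ⟨?_, ?_⟩) Δ₂
    · have : 2 < √6 := Real.lt_sqrt_of_sq_lt (by norm_num)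
      linarith
    · linarith
  have hP' : P = nodeCubic 1 Δ₁ Δ₂ := by
    funext x
    simp only [hP, nodeCubic]
    ring
  have hA' : A = nodeMatrix 1 Δ₁ Δ₂ := by
    funext ρ
    simp [hA, nodeMatrix]
  subst hP' hA'
  obtain ⟨a, b, hab, hunique⟩ := condition_and_root_implies_unique_nullvector_general
    one_pos h21 h12 (by linear_combination hquad) hroot
  exact ⟨a, b, hab, fun r' a' b' hnull _ => hunique r' a' b' hnull⟩
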